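/- arXiv:2007.02133 — 2 statements merged into one kernel-verified Lean document; each statement's English description precedes it below -/
import Mathlib

section
/- Let G be a connected finite simple graph. For every signal x ∈ ℝ^n, the sequence of vectors h^{(K)} = ((I + P̃)/2)^K x, obtained by applying K layers of the renormalized graph convolution with residual connection to x, converges entrywise as K → ∞ to the vector π = (⟨D̃^{1/2}𝟙, x⟩ / (2m + n)) · D̃^{1/2}𝟙. -/
/-!
Write `M = (1 + P̃)/2`. The identity `1 - P̃ = D̃^{-1/2} (D - A) D̃^{-1/2}` expresses the normalized
Laplacian of the self-looped graph through the Laplacian `D - A` of `G` itself (the self-loops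
cancel), so `1 - M` is positive semidefinite, and for connected `G` the fixed vectors of `M` are
exactly the multiples of `D̃^{1/2}𝟙`. Likewise
`1 + P̃ = D̃^{-1/2} (D + A) D̃^{-1/2} + 2 D̃^{-1}` is positive semidefinite, since the signless
Laplacian `D + A` is.

Hence all eigenvalues of the symmetric matrix `M` lie in `[0, 1]`, and the spectral theorem gives
convergence of `M ^ K x` to some `y` (`exists_tendsto_pow_mulVec`). By continuity `M y = y`, so `y`
is a multiple of `D̃^{1/2}𝟙`. The multiple is found from the conserved quantity
`⟨D̃^{1/2}𝟙, M ^ K x⟩ = ⟨D̃^{1/2}𝟙, x⟩`, together with `‖D̃^{1/2}𝟙‖² = ∑ (dᵢ + 1) = 2m + n`.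
-/

open Matrix Finset

/-- Diagonal matrix `D̃^{1/2}` with entries `√(dⱼ+1)`. -/
noncomputable def DtildeHalf {n : ℕ} (G : SimpleGraph (Fin n)) [DecidableRel G.Adj] :
    Matrix (Fin n) (Fin n) ℝ :=
  Matrix.diagonal fun j => Real.sqrt ((G.degree j : ℝ) + 1)

/-- Diagonal matrix `D̃^{-1/2}` with entries `1/√(dⱼ+1)`. -/
noncomputable def DtildeInvHalf {n : ℕ} (G : SimpleGraph (Fin n)) [DecidableRel G.Adj] :
    Matrix (Fin n) (Fin n) ℝ :=
  Matrix.diagonal fun j => 1 / Real.sqrt ((G.degree j : ℝ) + 1)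

/-- Diagonal matrix `D̃^{-1}` with entries `1/(dⱼ+1)`. -/
noncomputable def DtildeInv {n : ℕ} (G : SimpleGraph (Fin n)) [DecidableRel G.Adj] :
    Matrix (Fin n) (Fin n) ℝ :=
  Matrix.diagonal fun j => 1 / ((G.degree j : ℝ) + 1)

/-- Adjacency matrix of the self-looped graph: `Ã = A + I`. -/
noncomputable def Atilde {n : ℕ} (G : SimpleGraph (Fin n)) [DecidableRel G.Adj] :
    Matrix (Fin n) (Fin n) ℝ :=
  G.adjMatrix ℝ + 1

/-- Renormalized graph convolution matrix `P̃ = D̃^{-1/2} Ã D̃^{-1/2}`. -/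
noncomputable def Ptilde {n : ℕ} (G : SimpleGraph (Fin n)) [DecidableRel G.Adj] :
    Matrix (Fin n) (Fin n) ℝ :=
  DtildeInvHalf G * Atilde G * DtildeInvHalf G

/-- Normalized Laplacian of the self-looped graph: `L̃ = I - P̃`. -/
noncomputable def Ltilde {n : ℕ} (G : SimpleGraph (Fin n)) [DecidableRel G.Adj] :
    Matrix (Fin n) (Fin n) ℝ :=
  1 - Ptilde G

/-- Lazy random-walk transition matrix `W = (I + Ã D̃^{-1})/2` of the self-looped graph. -/
noncomputable def lazyW {n : ℕ} (G : SimpleGraph (Fin n)) [DecidableRel G.Adj] :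
    Matrix (Fin n) (Fin n) ℝ :=
  (2 : ℝ)⁻¹ • (1 + Atilde G * DtildeInv G)

/-- Powers of a symmetric matrix with spectrum in `[0, 1]` converge pointwise: in an orthonormal
eigenbasis, the coordinates are multiplied by `λ ^ K`, which tends to `0` or is constantly `1`. -/
lemma exists_tendsto_pow_mulVec {n : ℕ} {M : Matrix (Fin n) (Fin n) ℝ} (h0 : M.PosSemidef)
    (h1 : (1 - M).PosSemidef) (x : Fin n → ℝ) :
    ∃ y : Fin n → ℝ, Filter.Tendsto (fun K : ℕ => (M ^ K) *ᵥ x) Filter.atTop (nhds y) := by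
  have hM := h0.isHermitian
  set b := hM.eigenvectorBasis with hb
  set ev := hM.eigenvalues with hev
  have hmul : ∀ i, M *ᵥ ⇑(b i) = ev i • ⇑(b i) := hM.mulVec_eigenvectorBasis
  have hpow : ∀ i (K : ℕ), (M ^ K) *ᵥ ⇑(b i) = (ev i ^ K) • ⇑(b i) := by
    intro i K
    induction K with
    | zero => simp
    | succ K ih => rw [pow_succ, ← mulVec_mulVec, hmul, mulVec_smul, ih, smul_smul, pow_succ']
  have hle : ∀ i, ev i ≤ 1 := by
    intro i
    have h := h1.dotProduct_mulVec_nonneg ⇑(b i)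
    have hnorm : (⇑(b i) : Fin n → ℝ) ⬝ᵥ ⇑(b i) = 1 := by
      have := EuclideanSpace.inner_eq_star_dotProduct (b i) (b i)
      rw [real_inner_self_eq_norm_sq, b.orthonormal.1 i] at this
      simpa using this.symm
    rw [star_trivial, sub_mulVec, one_mulVec, hmul, dotProduct_sub, dotProduct_smul, hnorm] at h
    simpa using h
  have hx : x = ∑ i, b.repr (WithLp.toLp 2 x) i • ⇑(b i) := by
    have := congrArg WithLp.ofLp (b.sum_repr (WithLp.toLp 2 x))
    simpa using this.symm
  have hlim : ∀ i, ∃ l : ℝ, Filter.Tendsto (fun K : ℕ => ev i ^ K) Filter.atTop (nhds l) := by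
    intro i
    rcases (hle i).lt_or_eq with h | h
    · exact ⟨0, tendsto_pow_atTop_nhds_zero_of_lt_one (h0.eigenvalues_nonneg i) h⟩
    · exact ⟨1, by simp [h]⟩
  choose l hl using hlim
  refine ⟨∑ i, b.repr (WithLp.toLp 2 x) i • l i • ⇑(b i), ?_⟩
  have hK : ∀ K : ℕ, (M ^ K) *ᵥ x =
      ∑ i, b.repr (WithLp.toLp 2 x) i • (ev i ^ K) • (⇑(b i) : Fin n → ℝ) := by
    intro K
    conv_lhs => rw [hx]
    simp_rw [mulVec_sum, mulVec_smul, hpow]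
  simp_rw [hK]
  exact tendsto_finsetSum _ fun i _ => ((hl i).smul_const _).const_smul _

section Graph

variable {n : ℕ} (G : SimpleGraph (Fin n)) [DecidableRel G.Adj]

/-- The signless Laplacian `D + A` has quadratic form `∑_{i ∼ j} (zᵢ + zⱼ)² ≥ 0`. -/
lemma posSemidef_signlessLap : (G.degMatrix ℝ + G.adjMatrix ℝ).PosSemidef := by
  refine .of_dotProduct_mulVec_nonneg
    ((G.isHermitian_degMatrix ℝ).add (G.isHermitian_adjMatrix ℝ)) fun z => ?_
  have key : z ⬝ᵥ ((G.degMatrix ℝ + G.adjMatrix ℝ) *ᵥ z) =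
      (∑ i, ∑ j, if G.Adj i j then (z i + z j) ^ 2 else 0) / 2 := by
    -- `D + A = 2 D - (D - A)`, and the quadratic form of `D - A` is available.
    have hL := G.lapMatrix_toLinearMap₂' ℝ z
    rw [toLinearMap₂'_apply', SimpleGraph.lapMatrix, sub_mulVec, dotProduct_sub] at hL
    have hA : z ⬝ᵥ (G.adjMatrix ℝ *ᵥ z) = ∑ i, ∑ j, if G.Adj i j then z i * z j else 0 :=
      G.dotProduct_mulVec_adjMatrix _ _
    have hsum : (∑ i, ∑ j, if G.Adj i j then (z i + z j) ^ 2 else 0) =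
        (∑ i, ∑ j, if G.Adj i j then (z i - z j) ^ 2 else 0) +
          4 * ∑ i, ∑ j, if G.Adj i j then z i * z j else 0 := by
      simp_rw [mul_sum, ← sum_add_distrib]
      refine sum_congr rfl fun i _ => sum_congr rfl fun j _ => ?_
      split_ifs <;> ring
    rw [add_mulVec, dotProduct_add, hsum]
    linarith
  rw [star_trivial, key]
  positivity

lemma sqrt_degree_pos (i : Fin n) : 0 < √((G.degree i : ℝ) + 1) := by positivity

lemma DtildeInvHalf_conj_Dtilde :
    DtildeInvHalf G * (G.degMatrix ℝ + 1) * DtildeInvHalf G = 1 := by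
  rw [DtildeInvHalf, SimpleGraph.degMatrix, ← diagonal_one, diagonal_add, diagonal_mul_diagonal,
    diagonal_mul_diagonal]
  congr 1
  ext i
  have h := (sqrt_degree_pos G i).ne'
  have h2 : √((G.degree i : ℝ) + 1) ^ 2 = G.degree i + 1 := Real.sq_sqrt (by positivity)
  field_simp
  linarith

/-- The self-loops cancel in `D̃ - Ã = D - A`. -/
lemma one_sub_Ptilde :
    1 - Ptilde G = DtildeInvHalf G * G.lapMatrix ℝ * DtildeInvHalf G := by
  conv_lhs => rw [← DtildeInvHalf_conj_Dtilde G]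
  rw [Ptilde, Atilde, SimpleGraph.lapMatrix]
  noncomm_ring

lemma one_add_Ptilde :
    1 + Ptilde G = DtildeInvHalf G *
      (G.degMatrix ℝ + G.adjMatrix ℝ + (1 + 1)) * DtildeInvHalf G := by
  conv_lhs => rw [← DtildeInvHalf_conj_Dtilde G]
  rw [Ptilde, Atilde]
  noncomm_ring

lemma DtildeInvHalf_conjTranspose : (DtildeInvHalf G)ᴴ = DtildeInvHalf G := by
  simp [DtildeInvHalf]

lemma posSemidef_one_sub_Ptilde : (1 - Ptilde G).PosSemidef := by
  have h := (G.posSemidef_lapMatrix ℝ).mul_mul_conjTranspose_same (DtildeInvHalf G)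
  rwa [DtildeInvHalf_conjTranspose, ← one_sub_Ptilde] at h

lemma posSemidef_one_add_Ptilde : (1 + Ptilde G).PosSemidef := by
  have h := ((posSemidef_signlessLap G).add
    (PosSemidef.one.add PosSemidef.one)).mul_mul_conjTranspose_same (DtildeInvHalf G)
  rwa [DtildeInvHalf_conjTranspose, ← one_add_Ptilde] at h

lemma DtildeInvHalf_mulVec_apply (y : Fin n → ℝ) (i : Fin n) :
    (DtildeInvHalf G *ᵥ y) i = y i / √((G.degree i : ℝ) + 1) := by
  rw [DtildeInvHalf, mulVec_diagonal, one_div_mul_eq_div]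

lemma Ptilde_mulVec_sqrt_degree :
    Ptilde G *ᵥ (fun i => √((G.degree i : ℝ) + 1)) = fun i => √((G.degree i : ℝ) + 1) := by
  have h : (1 - Ptilde G) *ᵥ (fun i => √((G.degree i : ℝ) + 1)) = 0 := by
    have hone : DtildeInvHalf G *ᵥ (fun i => √((G.degree i : ℝ) + 1)) = fun _ => 1 := by
      ext i
      rw [DtildeInvHalf_mulVec_apply, div_self (sqrt_degree_pos G i).ne']
    rw [one_sub_Ptilde, ← mulVec_mulVec, hone, ← mulVec_mulVec,
      G.lapMatrix_mulVec_const_eq_zero, mulVec_zero]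
  rw [sub_mulVec, one_mulVec, sub_eq_zero] at h
  exact h.symm

/-- The kernel of the Laplacian of a connected graph consists of the constants, so `P̃` fixes only
the multiples of `D̃^{1/2}𝟙`. -/
lemma exists_eq_smul_of_Ptilde_mulVec_eq (hconn : G.Connected) {y : Fin n → ℝ}
    (hy : Ptilde G *ᵥ y = y) : ∃ c : ℝ, ∀ i, y i = c * √((G.degree i : ℝ) + 1) := by
  have h : (1 - Ptilde G) *ᵥ y = 0 := by rw [sub_mulVec, one_mulVec, hy, sub_self]
  rw [one_sub_Ptilde, ← mulVec_mulVec, ← mulVec_mulVec] at h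
  have hL : G.lapMatrix ℝ *ᵥ (DtildeInvHalf G *ᵥ y) = 0 := by
    ext i
    have hi := congrFun h i
    rw [DtildeInvHalf_mulVec_apply] at hi
    simpa [(sqrt_degree_pos G i).ne'] using hi
  rw [G.lapMatrix_mulVec_eq_zero_iff_forall_reachable] at hL
  obtain ⟨i₀⟩ := hconn.nonempty
  refine ⟨(DtildeInvHalf G *ᵥ y) i₀, fun i => ?_⟩
  rw [hL i₀ i (hconn.preconnected i₀ i), DtildeInvHalf_mulVec_apply,
    div_mul_cancel₀ _ (sqrt_degree_pos G i).ne']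

lemma sum_sqrt_degree_sq :
    ∑ i, √((G.degree i : ℝ) + 1) * √((G.degree i : ℝ) + 1) =
      2 * (G.edgeFinset.card : ℝ) + (n : ℝ) := by
  simp_rw [fun i => Real.mul_self_sqrt (show (0 : ℝ) ≤ (G.degree i : ℝ) + 1 by positivity)]
  rw [sum_add_distrib, ← Nat.cast_sum, G.sum_degrees_eq_twice_card_edges]
  simp

end Graph

/-- For a connected finite simple graph, `h^{(K)} = ((I+P̃)/2)^K x` converges
entrywise to `π = (⟨D̃^{1/2}𝟙, x⟩/(2m+n)) · D̃^{1/2}𝟙`. -/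
theorem gcn_residual_converges {n : ℕ} (G : SimpleGraph (Fin n)) [DecidableRel G.Adj]
    (hconn : G.Connected) (x : Fin n → ℝ) (j : Fin n) :
    Filter.Tendsto
      (fun K : ℕ => ((((2 : ℝ)⁻¹ • (1 + Ptilde G)) ^ K).mulVec x) j)
      Filter.atTop
      (nhds (((∑ i, Real.sqrt ((G.degree i : ℝ) + 1) * x i) /
          (2 * (G.edgeFinset.card : ℝ) + (n : ℝ))) * Real.sqrt ((G.degree j : ℝ) + 1))) := by
  set M : Matrix (Fin n) (Fin n) ℝ := (2 : ℝ)⁻¹ • (1 + Ptilde G) with hMdef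
  have h0 : M.PosSemidef := (posSemidef_one_add_Ptilde G).smul (by norm_num)
  have h1 : (1 - M).PosSemidef := by
    have h : 1 - M = (2 : ℝ)⁻¹ • (1 - Ptilde G) := by
      rw [hMdef]
      module
    rw [h]
    exact (posSemidef_one_sub_Ptilde G).smul (by norm_num)
  obtain ⟨y, hy⟩ := exists_tendsto_pow_mulVec h0 h1 x
  have hMy : M *ᵥ y = y := by
    have hstep : Filter.Tendsto (fun K : ℕ => (M ^ (K + 1)) *ᵥ x) Filter.atTop
        (nhds (M *ᵥ y)) := by
      simp_rw [pow_succ', ← mulVec_mulVec]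
      exact ((Continuous.matrix_mulVec continuous_const continuous_id).tendsto y).comp hy
    exact tendsto_nhds_unique hstep ((Filter.tendsto_add_atTop_iff_nat 1).2 hy)
  have hPy : Ptilde G *ᵥ y = y := by
    have h := hMy
    rw [hMdef, smul_mulVec, add_mulVec, one_mulVec] at h
    ext i
    have hi := congrFun h i
    simp only [Pi.smul_apply, Pi.add_apply, smul_eq_mul] at hi
    linarith
  obtain ⟨c, hc⟩ := exists_eq_smul_of_Ptilde_mulVec_eq G hconn hPy
  set v : Fin n → ℝ := fun i => √((G.degree i : ℝ) + 1) with hv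
  have hMv : M *ᵥ v = v := by
    rw [hMdef, smul_mulVec, add_mulVec, one_mulVec, Ptilde_mulVec_sqrt_degree]
    module
  have hvM : v ᵥ* M = v := by
    have hT : Mᵀ = M := by simpa [IsHermitian] using h0.isHermitian
    rw [← mulVec_transpose, hT, hMv]
  have hinv : ∀ K : ℕ, v ⬝ᵥ ((M ^ K) *ᵥ x) = v ⬝ᵥ x := by
    intro K
    induction K with
    | zero => simp
    | succ K ih => rw [pow_succ', ← mulVec_mulVec, dotProduct_mulVec, hvM, ih]
  have hvy : v ⬝ᵥ y = v ⬝ᵥ x := by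
    have h : Filter.Tendsto (fun K : ℕ => v ⬝ᵥ ((M ^ K) *ᵥ x)) Filter.atTop (nhds (v ⬝ᵥ y)) :=
      ((Continuous.dotProduct continuous_const continuous_id).tendsto y).comp hy
    simp_rw [hinv] at h
    exact (tendsto_nhds_unique h tendsto_const_nhds)
  have hcv : c * (2 * (G.edgeFinset.card : ℝ) + (n : ℝ)) = v ⬝ᵥ x := by
    rw [← hvy, ← sum_sqrt_degree_sq, mul_sum, dotProduct]
    refine sum_congr rfl fun i _ => ?_
    rw [hc i]
    ring
  have hpos : (0 : ℝ) < 2 * (G.edgeFinset.card : ℝ) + (n : ℝ) := by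
    have : (0 : ℝ) < n := by exact_mod_cast j.pos
    positivity
  have hlim := (tendsto_pi_nhds.1 hy) j
  rw [hc j, eq_div_of_mul_eq hpos.ne' hcv] at hlim
  exact hlim
end

section
/- Let G be a finite simple graph with normalized Laplacian L̃ of its self-looped graph, let K ≥ 1, and let θ_0, …, θ_{K−1} ∈ ℝ be arbitrary polynomial filter coefficients such that each derived coefficient c_ℓ := (−1)^ℓ ∑_{k=ℓ}^{K−1} θ_k · C(k, ℓ) is nonzero for ℓ = 0, …, K−1. Then there exist scalars γ_0, …, γ_{K−1} ∈ ℝ such that the nested-product filter realized by a K-layer GCNII matches the target filter: ∑_{ℓ=0}^{K−1} (∏_{k=K−ℓ−1}^{K−1} γ_k) · (I − L̃)^ℓ = ∑_{k=0}^{K−1} θ_k L̃^k (as matrices, hence applied to every signal x ∈ ℝ^n). -/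
/-!
The binomial theorem rewrites `∑ θ_k L̃^k` in powers of `I - L̃`, with exactly the derived
coefficients `c_ℓ` (`sum_smul_pow_eq`). Since no `c_ℓ` vanishes, the ratios `c_ℓ / c_{ℓ-1}` are
legitimate scalars whose products telescope to `c_ℓ` (`exists_tail_prod_eq`). Nothing about `L̃`
beyond its being an element of a real algebra is needed.
-/

open Matrix Finset

/-- Any finite sequence `c 0, …, c (K - 1)` without zeros is the sequence of products of the last
`ℓ + 1` of some scalars `γ 0, …, γ (K - 1)`, namely of the telescoping ratios
`γ (K - 1 - ℓ) = c ℓ / c (ℓ - 1)`, with `γ (K - 1) = c 0`. -/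
theorem exists_tail_prod_eq (K : ℕ) (c : ℕ → ℝ) (hc : ∀ ℓ < K, c ℓ ≠ 0) :
    ∃ γ : ℕ → ℝ, ∀ ℓ < K, ∏ k ∈ Finset.Icc (K - ℓ - 1) (K - 1), γ k = c ℓ := by
  refine ⟨fun k => if k = K - 1 then c 0 else c (K - 1 - k) / c (K - 1 - k - 1), ?_⟩
  intro ℓ
  induction ℓ with
  | zero => simp
  | succ m ih =>
    intro hm
    have hIcc : Finset.Icc (K - (m + 1) - 1) (K - 1) =
        insert (K - (m + 1) - 1) (Finset.Icc (K - m - 1) (K - 1)) := by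
      ext x
      simp only [Finset.mem_Icc, Finset.mem_insert]
      omega
    have hnot : K - (m + 1) - 1 ∉ Finset.Icc (K - m - 1) (K - 1) := by
      simp only [Finset.mem_Icc]
      omega
    rw [hIcc, Finset.prod_insert hnot, ih (by omega), if_neg (by omega),
      show K - 1 - (K - (m + 1) - 1) = m + 1 by omega, Nat.add_sub_cancel,
      div_mul_cancel₀ _ (hc m (by omega))]

/-- Re-expansion of a polynomial in `L` in powers of `1 - L`, by the binomial theorem applied to
`L = -(1 - L) + 1`. -/
theorem sum_smul_pow_eq {R : Type*} [Ring R] [Algebra ℝ R] (L : R) (K : ℕ) (θ : ℕ → ℝ) :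
    ∑ k ∈ Finset.range K, θ k • L ^ k =
      ∑ ℓ ∈ Finset.range K,
        ((-1 : ℝ) ^ ℓ * ∑ k ∈ Finset.Icc ℓ (K - 1), θ k * (k.choose ℓ : ℝ)) • (1 - L) ^ ℓ := by
  have hpow (k : ℕ) : L ^ k =
      ∑ ℓ ∈ Finset.range (k + 1), ((-1 : ℝ) ^ ℓ * (k.choose ℓ : ℝ)) • (1 - L) ^ ℓ := by
    have h := (Commute.one_right (-(1 - L))).add_pow k
    rw [show -(1 - L) + 1 = L by abel] at h
    rw [h]
    refine Finset.sum_congr rfl fun ℓ _ => ?_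
    rw [one_pow, mul_one, ← neg_one_smul ℝ (1 - L), smul_pow, mul_comm _ (k.choose ℓ : ℝ),
      mul_smul, ← nsmul_eq_mul', Nat.cast_smul_eq_nsmul]
  simp_rw [hpow, Finset.smul_sum, Finset.mul_sum, Finset.sum_smul, smul_smul]
  rw [Finset.sum_comm' (t' := Finset.range K) (s' := fun ℓ => Finset.Icc ℓ (K - 1))]
  · refine Finset.sum_congr rfl fun ℓ _ => Finset.sum_congr rfl fun k _ => ?_
    congr 1
    ring
  · intro k ℓ
    simp only [Finset.mem_range, Finset.mem_Icc]
    omega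

/-- Theorem 2 of the paper, matrix form. If each derived coefficient
`c_ℓ = (−1)^ℓ ∑_{k=ℓ}^{K−1} θ_k·C(k,ℓ)` is nonzero, then there are scalars `γ_0, …, γ_{K−1}`
such that `∑_{ℓ=0}^{K−1} (∏_{k=K−ℓ−1}^{K−1} γ_k)·(I − L̃)^ℓ = ∑_{k=0}^{K−1} θ_k L̃^k`. -/
theorem gcnii_expresses_arbitrary_filter {n : ℕ} (G : SimpleGraph (Fin n))
    [DecidableRel G.Adj] (K : ℕ) (hK : 1 ≤ K) (θ : ℕ → ℝ)
    (hc : ∀ ℓ < K,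
      (-1 : ℝ) ^ ℓ * ∑ k ∈ Finset.Icc ℓ (K - 1), θ k * (k.choose ℓ : ℝ) ≠ 0) :
    ∃ γ : ℕ → ℝ,
      ∑ ℓ ∈ Finset.range K,
          (∏ k ∈ Finset.Icc (K - ℓ - 1) (K - 1), γ k) •
            ((1 : Matrix (Fin n) (Fin n) ℝ) - Ltilde G) ^ ℓ =
        ∑ k ∈ Finset.range K, θ k • Ltilde G ^ k := by
  obtain ⟨γ, hγ⟩ := exists_tail_prod_eq K _ hc
  refine ⟨γ, ?_⟩
  rw [sum_smul_pow_eq (Ltilde G) K θ]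
  exact Finset.sum_congr rfl fun ℓ hℓ => by rw [hγ ℓ (Finset.mem_range.mp hℓ)]
end
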